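/- arXiv:1409.1097 — 2 statements merged into one kernel-verified Lean document; each statement's English description precedes it below -/
import Mathlib

section
/- Let N ≥ 2 and let k_1, …, k_N be as in the context. Then ρ = 1 if and only if N = 2, k_1 = 2 and k_2 = 3. -/
/-!
Each `k i ≥ 2` gives `2 M_i ≤ M`, so `2ρ = 2 (N - 1) M - 2 ∑ M_i ≥ (N - 2) M`. For `N ≥ 3` the
right-hand side is at least `2 ^ 3`, and for `N ≤ 1` clearly `ρ ≤ 0`; so `ρ = 1` forces `N = 2`,
where it reads `(k i - 1) (k j - 1) = 2`.
-/

open Finset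

section

variable {ι : Type*} {k : ι → ℕ} {s : Finset ι}

/-- The coefficient `ρ` in the canonical divisor `K_S = ρ λ` of an elliptic surface with multiple
fibers indexed by `s`, of multiplicities `k i`; here `M = ∏ j ∈ s, k j` and `M_i = M / k i`. -/
def rho (k : ι → ℕ) (s : Finset ι) : ℤ :=
  ((#s : ℤ) - 1) * ((∏ i ∈ s, k i : ℕ) : ℤ) - ∑ i ∈ s, (((∏ j ∈ s, k j) / k i : ℕ) : ℤ)

lemma rho_nonpos_of_card_le_one (hs : #s ≤ 1) : rho k s ≤ 0 := by
  have hcard : (#s : ℤ) - 1 ≤ 0 := by lia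
  have hprod : ((#s : ℤ) - 1) * ((∏ i ∈ s, k i : ℕ) : ℤ) ≤ 0 :=
    mul_nonpos_of_nonpos_of_nonneg hcard (Int.natCast_nonneg _)
  have hsum : 0 ≤ ∑ i ∈ s, (((∏ j ∈ s, k j) / k i : ℕ) : ℤ) :=
    sum_nonneg fun _ _ => Int.natCast_nonneg _
  rw [rho]
  linarith

lemma card_sub_two_mul_prod_le_two_mul_rho (hk : ∀ i ∈ s, 1 < k i) :
    ((#s : ℤ) - 2) * ((∏ i ∈ s, k i : ℕ) : ℤ) ≤ 2 * rho k s := by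
  set M := ∏ i ∈ s, k i with hM
  have hterm : ∀ i ∈ s, 2 * ((M / k i : ℕ) : ℤ) ≤ M := fun i hi => by
    exact_mod_cast (Nat.mul_le_mul_right _ (hk i hi)).trans (Nat.mul_div_le M (k i))
  have hsum : 2 * ∑ i ∈ s, ((M / k i : ℕ) : ℤ) ≤ #s * (M : ℤ) := by
    rw [mul_sum, ← nsmul_eq_mul]
    exact sum_le_card_nsmul s _ _ hterm
  rw [rho, ← hM]
  linarith

lemma one_lt_rho_of_two_lt_card (hk : ∀ i ∈ s, 1 < k i) (hs : 2 < #s) : 1 < rho k s := by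
  have hprod : 2 ^ 3 ≤ ∏ i ∈ s, k i :=
    (Nat.pow_le_pow_right two_pos hs).trans (pow_card_le_prod s k 2 hk)
  have hcard : (1 : ℤ) ≤ #s - 2 := by lia
  have hle := card_sub_two_mul_prod_le_two_mul_rho hk
  have hmul := le_mul_of_one_le_left (Int.natCast_nonneg (∏ i ∈ s, k i)) hcard
  lia

lemma card_eq_two_of_rho_eq_one (hk : ∀ i ∈ s, 1 < k i) (h : rho k s = 1) : #s = 2 := by
  rcases lt_trichotomy #s 2 with hlt | heq | hgt
  · have := rho_nonpos_of_card_le_one (k := k) (Nat.le_of_lt_succ hlt)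
    lia
  · exact heq
  · exact absurd h (one_lt_rho_of_two_lt_card hk hgt).ne'

variable [DecidableEq ι]

lemma rho_pair {i j : ι} (hij : i ≠ j) (hi : 0 < k i) (hj : 0 < k j) :
    rho k {i, j} = ((k i : ℤ) - 1) * ((k j : ℤ) - 1) - 1 := by
  rw [rho, card_pair hij, prod_pair hij, sum_pair hij, Nat.mul_div_cancel_left _ hi,
    Nat.mul_div_cancel _ hj]
  push_cast
  ring

lemma sub_one_mul_sub_one_eq_two_iff {a b : ℤ} (ha : 1 < a) :
    (a - 1) * (b - 1) = 2 ↔ a = 2 ∧ b = 3 ∨ a = 3 ∧ b = 2 := by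
  constructor
  · intro h
    have hle : a - 1 ≤ 2 := Int.le_of_dvd two_pos (Dvd.intro _ h)
    obtain rfl | rfl : a = 2 ∨ a = 3 := by lia
    all_goals lia
  · rintro (⟨rfl, rfl⟩ | ⟨rfl, rfl⟩) <;> rfl

theorem rho_eq_one_iff_general (hk : ∀ i ∈ s, 1 < k i) :
    rho k s = 1 ↔ ∃ i j, s = {i, j} ∧ k i = 2 ∧ k j = 3 := by
  constructor
  · intro h
    obtain ⟨i, j, hij, rfl⟩ := card_eq_two.mp (card_eq_two_of_rho_eq_one hk h)
    have hi : 1 < k i := hk i (by simp)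
    have hj : 1 < k j := hk j (by simp)
    rw [rho_pair hij (by lia) (by lia)] at h
    have hmul : ((k i : ℤ) - 1) * ((k j : ℤ) - 1) = 2 := by linarith
    rcases (sub_one_mul_sub_one_eq_two_iff (by lia)).mp hmul with ⟨h₂, h₃⟩ | ⟨h₃, h₂⟩
    · exact ⟨i, j, rfl, by exact_mod_cast h₂, by exact_mod_cast h₃⟩
    · exact ⟨j, i, pair_comm i j, by exact_mod_cast h₂, by exact_mod_cast h₃⟩
  · rintro ⟨i, j, rfl, hi, hj⟩
    have hij : i ≠ j := by
      rintro rfl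
      lia
    rw [rho_pair hij (by lia) (by lia), hi, hj]
    rfl

end

lemma exists_range_eq_pair_iff {α : Type*} [Preorder α] {N : ℕ} {k : ℕ → α} {a b : α}
    (hk : MonotoneOn k (Set.Iio N)) (hab : a < b) :
    (∃ i j, range N = {i, j} ∧ k i = a ∧ k j = b) ↔ N = 2 ∧ k 0 = a ∧ k 1 = b := by
  constructor
  · rintro ⟨i, j, hs, rfl, rfl⟩
    have hi : i < N := mem_range.mp (by simp [hs])
    have hj : j < N := mem_range.mp (by simp [hs])
    have hij : i < j := lt_of_not_ge fun hji => (hk hj hi hji).not_gt hab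
    have hN : N = 2 := by rw [← card_range N, hs, card_pair hij.ne]
    obtain ⟨rfl, rfl⟩ : i = 0 ∧ j = 1 := by lia
    exact ⟨hN, rfl, rfl⟩
  · rintro ⟨rfl, h₀, h₁⟩
    exact ⟨0, 1, rfl, h₀, h₁⟩

/-- Remark after Proposition 3.1: `ρ = 1` iff `N = 2`, `k 0 = 2` and `k 1 = 3`. -/
theorem rho_eq_one_iff
    (N : ℕ) (hN : 2 ≤ N) (k : ℕ → ℕ)
    (hk : ∀ i < N, 1 < k i)
    (hmono : ∀ i j, i < j → j < N → k i < k j)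
    (hcop : ∀ i j, i < j → j < N → Nat.Coprime (k i) (k j))
    (M : ℕ) (hM : M = ∏ i ∈ Finset.range N, k i)
    (ρ : ℤ)
    (hρ : ρ = ((N : ℤ) - 1) * (M : ℤ) - ∑ i ∈ Finset.range N, ((M / k i : ℕ) : ℤ)) :
    ρ = 1 ↔ (N = 2 ∧ k 0 = 2 ∧ k 1 = 3) := by
  have hk_mono : StrictMonoOn k (Set.Iio N) := fun i _ j hj hij => hmono i j hij hj
  have hρ_eq : ρ = rho k (range N) := by rw [hρ, hM, rho, card_range]
  rw [hρ_eq, rho_eq_one_iff_general fun i hi => hk i (mem_range.mp hi),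
    exists_range_eq_pair_iff hk_mono.monotoneOn (by norm_num)]
end

section
/- Let N ≥ 5 and let k_1, …, k_N be as in the context. Then, as real numbers, M · (N − 2 − ∑_{i=1}^{N} 1/k_i) > (10/11) · 2^N · (N−4) · (N−1)^((N−1)/2), where the power with exponent (N−1)/2 is a real power. -/
/-!
By coprimality at most one of the `kᵢ` is even. Put that one aside (or any one, if all are odd); it
is at least `2`, and the other `n = N - 1` are distinct odd numbers greater than `1`, so that
`M ≥ 2 · (3 · 5 ⋯ (2n + 1))`. Pairing opposite factors of `3 · 5 ⋯ (2n + 1)` gives products at least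
`6n`, hence `M ≥ 2 · (6n)^(n/2) = 2 · (3/2)^(n/2) · 2^n · n^(n/2)`. Finally `∑ 1/kᵢ < N/2`, so the
second factor exceeds `(N - 4)/2`. The constant `10/11` comes from `n = 3`:
`20/11` is just below `(3/2)^(3/2) = 1.837…`.
-/

open Finset
open scoped Nat

lemma prod_range_card_le_prod {R : Type*} [CommMonoid R] [PartialOrder R] [IsOrderedMonoid R]
    {f : ℕ → R} (hf : Monotone f) (s : Finset ℕ) :
    ∏ i ∈ range #s, f i ≤ ∏ a ∈ s, f a := by
  induction s using Finset.induction_on_max with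
  | empty => simp
  | insert m s hm ih =>
    have hms : m ∉ s := fun h => (hm m h).false
    have hcard : #s ≤ m := by
      simpa using card_le_card fun a ha => mem_range.2 (hm a ha)
    rw [card_insert_of_notMem hms, prod_range_succ, prod_insert hms, mul_comm]
    exact mul_le_mul' (hf hcard) ih

lemma doubleFactorial_le_prod_of_odd {s : Finset ℕ} (hs : ∀ a ∈ s, 1 < a)
    (hodd : ∀ a ∈ s, Odd a) : (2 * #s + 1)‼ ≤ ∏ a ∈ s, a := by
  have half_eq : ∀ a ∈ s, 2 * (a / 2 - 1 + 1) + 1 = a := fun a ha => by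
    have := hs a ha
    have := Nat.odd_iff.1 (hodd a ha)
    omega
  have hinj : Set.InjOn (fun a => a / 2 - 1) s :=
    Set.LeftInvOn.injOn (f₁' := fun i => 2 * (i + 1) + 1) half_eq
  calc (2 * #s + 1)‼
      = ∏ i ∈ range #(s.image fun a => a / 2 - 1), (2 * (i + 1) + 1) := by
        rw [card_image_of_injOn hinj, Nat.doubleFactorial_eq_prod_odd]
    _ ≤ ∏ i ∈ s.image fun a => a / 2 - 1, (2 * (i + 1) + 1) :=
        prod_range_card_le_prod (fun i j hij => by gcongr) _
    _ = ∏ a ∈ s, a := by rw [prod_image hinj, prod_congr rfl half_eq]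

lemma odd_or_odd_of_coprime {a b : ℕ} (hab : Nat.Coprime a b) : Odd a ∨ Odd b := by
  rw [or_iff_not_imp_right, Nat.not_odd_iff_even, even_iff_two_dvd]
  exact fun hb => Nat.coprime_two_right.1 (hab.coprime_dvd_right hb)

lemma exists_forall_mem_erase_odd {s : Finset ℕ} (hne : s.Nonempty)
    (hodd : (s : Set ℕ).Pairwise fun a b => Odd a ∨ Odd b) :
    ∃ e ∈ s, ∀ a ∈ s.erase e, Odd a := by
  by_cases hall : ∀ a ∈ s, Odd a
  · obtain ⟨e, he⟩ := hne
    exact ⟨e, he, fun a ha => hall a (mem_of_mem_erase ha)⟩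
  · push Not at hall
    obtain ⟨e, he, he_even⟩ := hall
    exact ⟨e, he, fun a ha =>
      (hodd (mem_of_mem_erase ha) he (ne_of_mem_erase ha)).resolve_right he_even⟩

lemma two_mul_doubleFactorial_le_prod {s : Finset ℕ} {n : ℕ} (hcard : #s = n + 1)
    (hs : ∀ a ∈ s, 1 < a) (hodd : (s : Set ℕ).Pairwise fun a b => Odd a ∨ Odd b) :
    2 * (2 * n + 1)‼ ≤ ∏ a ∈ s, a := by
  obtain ⟨e, he, hrest⟩ := exists_forall_mem_erase_odd (card_pos.1 (by omega)) hodd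
  have hcard_erase : #(s.erase e) = n := by rw [card_erase_of_mem he, hcard, Nat.add_sub_cancel]
  rw [← mul_prod_erase s (fun a => a) he, ← hcard_erase]
  exact Nat.mul_le_mul (hs e he)
    (doubleFactorial_le_prod_of_odd (fun a ha => hs a (mem_of_mem_erase ha)) hrest)

lemma six_mul_pow_le_doubleFactorial_sq (n : ℕ) : (6 * n) ^ n ≤ (2 * n + 1)‼ ^ 2 := by
  have pair_le : ∀ i ∈ range n, 6 * n ≤ (2 * (i + 1) + 1) * (2 * (n - 1 - i + 1) + 1) := by
    intro i hi
    obtain ⟨j, rfl⟩ : ∃ j, n = i + j + 1 := Nat.exists_eq_add_of_lt (mem_range.1 hi)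
    rw [show i + j + 1 - 1 - i = j by omega]
    nlinarith [Nat.zero_le (i * j)]
  calc (6 * n) ^ n = ∏ _i ∈ range n, 6 * n := by simp
    _ ≤ ∏ i ∈ range n, (2 * (i + 1) + 1) * (2 * (n - 1 - i + 1) + 1) := prod_le_prod' pair_le
    _ = (2 * n + 1)‼ ^ 2 := by
      rw [prod_mul_distrib, prod_range_reflect (fun i => 2 * (i + 1) + 1) n,
        ← Nat.doubleFactorial_eq_prod_odd, sq]

lemma rpow_natCast_div_two_sq {x : ℝ} (hx : 0 ≤ x) (n : ℕ) : (x ^ ((n : ℝ) / 2)) ^ 2 = x ^ n := by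
  rw [Real.rpow_div_two_eq_sqrt _ hx, Real.rpow_natCast, pow_right_comm, Real.sq_sqrt hx]

lemma six_mul_rpow_le_doubleFactorial (n : ℕ) :
    (6 * n : ℝ) ^ ((n : ℝ) / 2) ≤ (2 * n + 1)‼ := by
  refine le_of_sq_le_sq ?_ (by positivity)
  rw [rpow_natCast_div_two_sq (by positivity)]
  exact_mod_cast six_mul_pow_le_doubleFactorial_sq n

lemma twenty_div_eleven_lt_rpow {n : ℕ} (hn : 3 ≤ n) : 20 / 11 < (3 / 2 : ℝ) ^ ((n : ℝ) / 2) := by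
  refine lt_of_pow_lt_pow_left₀ 2 (by positivity) ?_
  calc (20 / 11 : ℝ) ^ 2 < (3 / 2) ^ 3 := by norm_num
    _ ≤ (3 / 2) ^ n := pow_le_pow_right₀ (by norm_num) hn
    _ = ((3 / 2 : ℝ) ^ ((n : ℝ) / 2)) ^ 2 := (rpow_natCast_div_two_sq (by norm_num) n).symm

lemma mul_two_pow_mul_rpow_lt_doubleFactorial {n : ℕ} (hn : 3 ≤ n) :
    20 / 11 * 2 ^ n * (n : ℝ) ^ ((n : ℝ) / 2) < (2 * n + 1)‼ := by
  have four_rpow : (4 : ℝ) ^ ((n : ℝ) / 2) = 2 ^ n := by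
    rw [Real.rpow_div_two_eq_sqrt _ (by norm_num), Real.rpow_natCast,
      show (4 : ℝ) = 2 ^ 2 by norm_num, Real.sqrt_sq (by norm_num)]
  calc 20 / 11 * 2 ^ n * (n : ℝ) ^ ((n : ℝ) / 2)
      < (3 / 2 : ℝ) ^ ((n : ℝ) / 2) * 2 ^ n * (n : ℝ) ^ ((n : ℝ) / 2) := by
        gcongr
        exact twenty_div_eleven_lt_rpow hn
    _ = (6 * n : ℝ) ^ ((n : ℝ) / 2) := by
        rw [← four_rpow, ← Real.mul_rpow (by norm_num) (by norm_num),
          ← Real.mul_rpow (by norm_num) (by positivity)]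
        norm_num
    _ ≤ (2 * n + 1)‼ := six_mul_rpow_le_doubleFactorial n

lemma sum_one_div_lt_card_div_two {s : Finset ℕ} (hcard : 1 < #s) (hs : ∀ a ∈ s, 1 < a) :
    ∑ a ∈ s, (1 : ℝ) / a < #s / 2 := by
  obtain ⟨b, hb, hb_ne⟩ := exists_mem_ne hcard 2
  have hb_gt : 2 < b := lt_of_le_of_ne (hs b hb) hb_ne.symm
  calc ∑ a ∈ s, (1 : ℝ) / a < ∑ _a ∈ s, (1 : ℝ) / 2 := by
        refine sum_lt_sum (fun a ha => ?_) ⟨b, hb, ?_⟩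
        · exact one_div_le_one_div_of_le two_pos (by exact_mod_cast hs a ha)
        · exact one_div_lt_one_div_of_lt two_pos (by exact_mod_cast hb_gt)
    _ = #s / 2 := by rw [sum_const, nsmul_eq_mul, mul_one_div]

theorem M_times_excess_bound_general {s : Finset ℕ} (hcard : 4 ≤ #s) (hs : ∀ a ∈ s, 1 < a)
    (hodd : (s : Set ℕ).Pairwise fun a b => Odd a ∨ Odd b) :
    10 / 11 * (2 : ℝ) ^ #s * (#s - 4) * ((#s : ℝ) - 1) ^ (((#s : ℝ) - 1) / 2)
      < (∏ a ∈ s, a : ℕ) * (#s - 2 - ∑ a ∈ s, (1 : ℝ) / a) := by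
  obtain ⟨n, hn⟩ : ∃ n, #s = n + 1 := ⟨#s - 1, by omega⟩
  have hn_three : 3 ≤ n := by omega
  have hn_sub : (0 : ℝ) ≤ n - 3 := sub_nonneg.2 (by exact_mod_cast hn_three)
  have hprod : 2 * ((2 * n + 1)‼ : ℝ) ≤ (∏ a ∈ s, a : ℕ) := by
    exact_mod_cast two_mul_doubleFactorial_le_prod hn hs hodd
  have hprod_pos : (0 : ℝ) < (∏ a ∈ s, a : ℕ) :=
    Nat.cast_pos.2 (prod_pos fun a ha => zero_lt_one.trans (hs a ha))
  have hsum := sum_one_div_lt_card_div_two (by omega) hs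
  rw [hn, Nat.cast_succ] at hsum ⊢
  rw [add_sub_cancel_right]
  calc 10 / 11 * (2 : ℝ) ^ (n + 1) * (n + 1 - 4) * (n : ℝ) ^ ((n : ℝ) / 2)
      = 20 / 11 * 2 ^ n * (n : ℝ) ^ ((n : ℝ) / 2) * (n - 3) := by ring
    _ ≤ (2 * n + 1)‼ * (n - 3) :=
        mul_le_mul_of_nonneg_right (mul_two_pow_mul_rpow_lt_doubleFactorial hn_three).le hn_sub
    _ = 2 * (2 * n + 1)‼ * ((n - 3) / 2) := by ring
    _ ≤ (∏ a ∈ s, a : ℕ) * ((n - 3) / 2) := mul_le_mul_of_nonneg_right hprod (by linarith)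
    _ < _ := mul_lt_mul_of_pos_left (by linarith) hprod_pos

/-- For pairwise coprime integers `1 < k 0 < ⋯ < k (N-1)` with `N ≥ 5` and `M = ∏ kᵢ`,
as real numbers `M · (N - 2 - ∑ 1/kᵢ) > (10/11) · 2^N · (N-4) · (N-1)^((N-1)/2)`
(real power). -/
theorem M_times_excess_bound
    (N : ℕ) (hN : 5 ≤ N) (k : ℕ → ℕ)
    (hk : ∀ i < N, 1 < k i)
    (hmono : ∀ i j, i < j → j < N → k i < k j)
    (hcop : ∀ i j, i < j → j < N → Nat.Coprime (k i) (k j))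
    (M : ℕ) (hM : M = ∏ i ∈ Finset.range N, k i) :
    (M : ℝ) * ((N : ℝ) - 2 - ∑ i ∈ Finset.range N, (1 : ℝ) / (k i : ℝ))
      > 10 / 11 * (2 : ℝ) ^ N * ((N : ℝ) - 4) * ((N : ℝ) - 1) ^ (((N : ℝ) - 1) / 2) := by
  have hinj : Set.InjOn k (range N) :=
    StrictMonoOn.injOn fun i _ j hj hij => hmono i j hij (mem_range.1 hj)
  have hcard : #((range N).image k) = N := by rw [card_image_of_injOn hinj, card_range]
  have hodd : ((range N).image k : Set ℕ).Pairwise fun a b => Odd a ∨ Odd b := by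
    intro a ha b hb hab
    obtain ⟨i, hi, rfl⟩ := mem_image.1 ha
    obtain ⟨j, hj, rfl⟩ := mem_image.1 hb
    rcases lt_or_gt_of_ne (ne_of_apply_ne k hab) with hij | hji
    · exact odd_or_odd_of_coprime (hcop i j hij (mem_range.1 hj))
    · exact (odd_or_odd_of_coprime (hcop j i hji (mem_range.1 hi))).symm
  have := M_times_excess_bound_general (s := (range N).image k) (by omega) (by simpa using hk) hodd
  rwa [hcard, prod_image hinj, sum_image hinj, ← hM] at this
end
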